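/- Let l > 0 and let u be the vortex map on B_l. Then Ā(u, B_l) ≤ ∫_{B_l} √(1 + |∇u(x)|²) dx + 2πl. In particular, for every l ∈ (0, 1/2) one has the strict inequality Ā(u, B_l) < ∫_{B_l} √(1 + |∇u(x)|²) dx + π. -/

import Mathlib

open MeasureTheory Filter Metric Topology
open scoped ENNReal NNReal

noncomputable section

abbrev V2 : Type := EuclideanSpace ℝ (Fin 2)

/-- Squared Frobenius norm of (the matrix of) a continuous linear map on `ℝ²`. -/
def frobSq (L : V2 →L[ℝ] V2) : ℝ :=
  ∑ i : Fin 2, ∑ j : Fin 2, (L (EuclideanSpace.single j 1) i) ^ 2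

/-- Determinant of (the matrix of) a continuous linear map on `ℝ²`. -/
def detJ (L : V2 →L[ℝ] V2) : ℝ :=
  L (EuclideanSpace.single 0 1) 0 * L (EuclideanSpace.single 1 1) 1 -
    L (EuclideanSpace.single 1 1) 0 * L (EuclideanSpace.single 0 1) 1

/-- The vortex map `x ↦ x / |x|` (equal to `0` at the origin). -/
def vortex (x : V2) : V2 := ‖x‖⁻¹ • x

/-- The area integrand `√(1 + |∇v|² + (det ∇v)²)`. -/
def areaIntegrand (v : V2 → V2) (x : V2) : ℝ :=
  Real.sqrt (1 + frobSq (fderiv ℝ v x) + detJ (fderiv ℝ v x) ^ 2)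

/-- Area of the graph of `v` over the set `E`. -/
def graphArea (v : V2 → V2) (E : Set V2) : ℝ≥0∞ :=
  ∫⁻ x in E, ENNReal.ofReal (areaIntegrand v x)

/-- `∫_{B_l} √(1 + |∇u|²) dx` for the vortex map `u`. -/
def vortexGradArea (l : ℝ) : ℝ≥0∞ :=
  ∫⁻ x in ball (0 : V2) l, ENNReal.ofReal (Real.sqrt (1 + frobSq (fderiv ℝ vortex x)))

/-- The `L¹`-relaxed area of the graph of the vortex map over `B_l`:
the infimum of `liminf_k 𝒜(v_k, B_l)` over all sequences `(v_k)` of maps that are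
`C¹` on `B_l` and converge to the vortex map in `L¹(B_l, ℝ²)`. -/
def relaxedArea (l : ℝ) : ℝ≥0∞ :=
  sInf { a : ℝ≥0∞ | ∃ v : ℕ → V2 → V2,
    (∀ k, ContDiffOn ℝ 1 (v k) (ball (0 : V2) l)) ∧
    Tendsto (fun k => ∫⁻ x in ball (0 : V2) l, ENNReal.ofReal ‖v k x - vortex x‖)
      atTop (𝓝 0) ∧
    a = Filter.liminf (fun k => graphArea (v k) (ball (0 : V2) l)) atTop }

/-- The unit-circle parametrization. -/
def circ (t : ℝ) : V2 := !₂[Real.cos t, Real.sin t]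

/-- Identification with the complex plane. -/
def toC (x : V2) : ℂ := Complex.orthonormalBasisOneI.repr.symm x

/-- The angle function. -/
def ang (x : V2) : ℝ := Complex.arg (toC x)

lemma toC_re (x : V2) : (toC x).re = x 0 := by
  simp [toC, Complex.orthonormalBasisOneI_repr_symm_apply]

lemma toC_im (x : V2) : (toC x).im = x 1 := by
  simp [toC, Complex.orthonormalBasisOneI_repr_symm_apply]

lemma toC_norm (x : V2) : ‖toC x‖ = ‖x‖ :=
  LinearIsometryEquiv.norm_map _ _

lemma contDiff_circ : ContDiff ℝ 1 circ := by
  rw [contDiff_euclidean]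
  intro i
  fin_cases i
  · simpa [circ] using Real.contDiff_cos
  · simpa [circ] using Real.contDiff_sin

lemma fderiv_circ_comp {Φ : V2 → ℝ} {x : V2} (h : DifferentiableAt ℝ Φ x) (e : V2) :
    fderiv ℝ (fun y => circ (Φ y)) x e 0 = - Real.sin (Φ x) * fderiv ℝ Φ x e ∧
    fderiv ℝ (fun y => circ (Φ y)) x e 1 = Real.cos (Φ x) * fderiv ℝ Φ x e := by
  have hd : DifferentiableAt ℝ (fun y => circ (Φ y)) x :=
    (contDiff_circ.differentiable (by simp) (Φ x)).comp x h
  constructor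
  · have h1 := ((EuclideanSpace.proj (𝕜 := ℝ) (0 : Fin 2)).hasFDerivAt.comp x hd.hasFDerivAt)
    have h2 := h.hasFDerivAt.cos
    have := h1.unique (h2.congr_of_eventuallyEq (Eventually.of_forall fun y => by simp [circ]))
    simpa using congrArg (fun L => L e) this
  · have h1 := ((EuclideanSpace.proj (𝕜 := ℝ) (1 : Fin 2)).hasFDerivAt.comp x hd.hasFDerivAt)
    have h2 := h.hasFDerivAt.sin
    have := h1.unique (h2.congr_of_eventuallyEq (Eventually.of_forall fun y => by simp [circ]))
    simpa using congrArg (fun L => L e) this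

lemma frobSq_circ_comp {Φ : V2 → ℝ} {x : V2} (h : DifferentiableAt ℝ Φ x) :
    frobSq (fderiv ℝ (fun y => circ (Φ y)) x) =
      (fderiv ℝ Φ x (EuclideanSpace.single 0 1)) ^ 2 +
      (fderiv ℝ Φ x (EuclideanSpace.single 1 1)) ^ 2 := by
  simp only [frobSq, Fin.sum_univ_two, (fderiv_circ_comp h _).1, (fderiv_circ_comp h _).2]
  have := Real.sin_sq_add_cos_sq (Φ x)
  linear_combination ((fderiv ℝ Φ x (EuclideanSpace.single 0 1)) ^ 2 +
      (fderiv ℝ Φ x (EuclideanSpace.single 1 1)) ^ 2) * this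

lemma detJ_circ_comp {Φ : V2 → ℝ} {x : V2} (h : DifferentiableAt ℝ Φ x) :
    detJ (fderiv ℝ (fun y => circ (Φ y)) x) = 0 := by
  simp only [detJ, (fderiv_circ_comp h _).1, (fderiv_circ_comp h _).2]
  ring

lemma circ_ang {x : V2} (hx : x ≠ 0) : circ (ang x) = vortex x := by
  have hn : ‖x‖ ≠ 0 := norm_ne_zero_iff.2 hx
  ext i
  fin_cases i
  · have := Complex.norm_mul_cos_arg (toC x)
    rw [toC_norm, toC_re] at this
    simp [circ, vortex, ang, ← this, hn]
  · have := Complex.norm_mul_sin_arg (toC x)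
    rw [toC_norm, toC_im] at this
    simp [circ, vortex, ang, ← this, hn]

lemma toC_contDiff : ContDiff ℝ 1 toC :=
  (Complex.orthonormalBasisOneI.repr.symm).contDiff

lemma hasFDerivAt_ang {x : V2} (hx : toC x ∈ Complex.slitPlane) :
    ∃ L : V2 →L[ℝ] ℝ, HasFDerivAt ang L x ∧ ∀ e, |L e| ≤ ‖x‖⁻¹ * ‖e‖ := by
  have h1 := (Complex.hasStrictFDerivAt_log_real hx).hasFDerivAt
  have h0 : HasFDerivAt toC
    (Complex.orthonormalBasisOneI.repr.symm.toContinuousLinearEquiv : V2 →L[ℝ] ℂ) x :=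
    (Complex.orthonormalBasisOneI.repr.symm.toContinuousLinearEquiv).hasFDerivAt
  have h2 := Complex.imCLM.hasFDerivAt.comp x (h1.comp x h0)
  refine ⟨_, h2.congr_of_eventuallyEq (Eventually.of_forall fun y => ?_), fun e => ?_⟩
  · simp [ang, Complex.log_im]
  · simp only [ContinuousLinearMap.comp_apply]
    refine (Complex.abs_im_le_norm _).trans ?_
    have h := toC_norm e
    simp only [toC, Complex.orthonormalBasisOneI_repr_symm_apply] at h
    simp [toC_norm, h]

lemma contDiffAt_ang {x : V2} (hx : toC x ∈ Complex.slitPlane) : ContDiffAt ℝ 1 ang x := by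
  have h1 : ContDiffAt ℝ 1 Complex.log (toC x) := (Complex.contDiffAt_log hx).restrict_scalars ℝ
  have := Complex.imCLM.contDiff.contDiffAt.comp x (h1.comp x toC_contDiff.contDiffAt)
  refine this.congr_of_eventuallyEq (Eventually.of_forall fun y => ?_)
  simp [ang, Complex.log_im]

lemma isOpen_slit : IsOpen {x : V2 | toC x ∈ Complex.slitPlane} :=
  Complex.isOpen_slitPlane.preimage toC_contDiff.continuous

lemma ne_zero_of_slit {x : V2} (hx : toC x ∈ Complex.slitPlane) : x ≠ 0 := by
  rintro rfl
  have := toC_norm 0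
  rw [norm_zero, norm_eq_zero] at this
  rw [this] at hx
  simp at hx

lemma vortex_eventuallyEq {x : V2} (hx : toC x ∈ Complex.slitPlane) :
    vortex =ᶠ[𝓝 x] fun y => circ (ang y) := by
  filter_upwards [isOpen_slit.mem_nhds hx] with y hy
  exact (circ_ang (ne_zero_of_slit hy)).symm

lemma frobSq_vortex {x : V2} (hx : toC x ∈ Complex.slitPlane) :
    frobSq (fderiv ℝ vortex x) = (fderiv ℝ ang x (EuclideanSpace.single 0 1)) ^ 2 +
      (fderiv ℝ ang x (EuclideanSpace.single 1 1)) ^ 2 := by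
  rw [(vortex_eventuallyEq hx).fderiv_eq,
    frobSq_circ_comp ((contDiffAt_ang hx).differentiableAt (by simp))]

lemma frobSq_nonneg (L : V2 →L[ℝ] V2) : 0 ≤ frobSq L := by
  unfold frobSq; positivity

lemma frobSq_vortex_le_slit {x : V2} (hx : toC x ∈ Complex.slitPlane) :
    frobSq (fderiv ℝ vortex x) ≤ 2 * (‖x‖⁻¹) ^ 2 := by
  obtain ⟨L, hL, hb⟩ := hasFDerivAt_ang hx
  rw [frobSq_vortex hx, hL.fderiv]
  have h0 := hb (EuclideanSpace.single 0 1)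
  have h1 := hb (EuclideanSpace.single 1 1)
  simp only [PiLp.norm_single, norm_one, mul_one] at h0 h1
  have h0' := sq_le_sq' (abs_le.1 h0).1 (abs_le.1 h0).2
  have h1' := sq_le_sq' (abs_le.1 h1).1 (abs_le.1 h1).2
  linarith

lemma frobSq_vortex_neg (x : V2) :
    frobSq (fderiv ℝ vortex (-x)) = frobSq (fderiv ℝ vortex x) := by
  have h : (fun y => vortex (-y)) = fun y => - vortex y := by
    funext y; simp [vortex]
  have h1 : fderiv ℝ (fun y => vortex (-y)) x = - fderiv ℝ vortex (-x) := by
    have := fderiv_comp_smul (𝕜 := ℝ) (f := vortex) (x := x) (-1)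
    simpa using this
  rw [h, fderiv_fun_neg] at h1
  rw [neg_inj] at h1
  rw [h1]

lemma frobSq_vortex_le {x : V2} (hx : x ≠ 0) :
    frobSq (fderiv ℝ vortex x) ≤ 2 * (‖x‖⁻¹) ^ 2 := by
  by_cases h : toC x ∈ Complex.slitPlane
  · exact frobSq_vortex_le_slit h
  · rw [← frobSq_vortex_neg, ← norm_neg]
    apply frobSq_vortex_le_slit
    rw [Complex.mem_slitPlane_iff] at h ⊢
    push Not at h
    rw [toC_re, toC_im] at *
    left
    simp only [PiLp.neg_apply]
    rcases h.1.lt_or_eq with h0 | h0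
    · linarith
    · exfalso; apply hx; ext i; fin_cases i
      · simpa using h0
      · simpa using h.2

lemma lintegral_prod_le (f g : ℝ → ℝ≥0∞) (hf : Measurable f) (hg : Measurable g) :
    ∫⁻ x : V2, f (x 0) * g (x 1) = (∫⁻ t, f t) * ∫⁻ t, g t := by
  have h1 := (EuclideanSpace.volume_preserving_symm_measurableEquiv_toLp (Fin 2))
  have h2 := (volume_preserving_finTwoArrow ℝ).comp h1
  have h3 := h2.lintegral_comp (f := fun p : ℝ × ℝ => f p.1 * g p.2)
    ((hf.comp measurable_fst).mul (hg.comp measurable_snd))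
  rw [Measure.volume_eq_prod, lintegral_prod_mul hf.aemeasurable hg.aemeasurable] at h3
  rw [← h3]
  rfl

lemma lintegral_deriv_mono {f : ℝ → ℝ} (hf : Monotone f) (hd : Differentiable ℝ f)
    (h0 : ∀ t, 0 ≤ f t) (h1 : ∀ t, f t ≤ 1) : ∫⁻ t, ENNReal.ofReal |deriv f t| ≤ 1 := by
  have := lintegral_deriv_eq_volume_image_of_monotoneOn (s := Set.univ) (f := f) (f' := deriv f)
    MeasurableSet.univ (fun x _ => (hd x).hasDerivAt.hasDerivWithinAt) (hf.monotoneOn _)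
  simp only [Measure.restrict_univ] at this
  calc ∫⁻ t, ENNReal.ofReal |deriv f t| = ∫⁻ t, ENNReal.ofReal (deriv f t) := by
        congr; funext t; rw [abs_of_nonneg hf.deriv_nonneg]
    _ = volume (f '' Set.univ) := this
    _ ≤ volume (Set.Icc (0:ℝ) 1) := by
        apply measure_mono; rintro _ ⟨t, -, rfl⟩; exact ⟨h0 t, h1 t⟩
    _ = 1 := by simp

/-- one-sided transition at scale `ε` -/
def stepT (ε t : ℝ) : ℝ := Real.smoothTransition (t / ε - 1)

lemma stepT_contDiff (ε : ℝ) : ContDiff ℝ 1 (stepT ε) := by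
  have : ContDiff ℝ 1 Real.smoothTransition := Real.smoothTransition.contDiff (n := 1)
  exact this.comp ((contDiff_id.div_const ε).sub contDiff_const)

lemma stepT_mono {ε : ℝ} (h : 0 < ε) : Monotone (stepT ε) := fun a b hab =>
  Real.smoothTransition.monotone (by gcongr)

lemma stepT_zero {ε t : ℝ} (h : 0 < ε) (ht : t ≤ ε) : stepT ε t = 0 :=
  Real.smoothTransition.zero_of_nonpos (by
    have := (div_le_one h).2 ht
    linarith)

lemma stepT_one {ε t : ℝ} (h : 0 < ε) (ht : 2 * ε ≤ t) : stepT ε t = 1 :=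
  Real.smoothTransition.one_of_one_le (by
    have := (le_div_iff₀ h).2 ht
    linarith)

lemma stepT_nonneg (ε t : ℝ) : 0 ≤ stepT ε t := Real.smoothTransition.nonneg _
lemma stepT_le_one (ε t : ℝ) : stepT ε t ≤ 1 := Real.smoothTransition.le_one _

/-- cutoffs in the two coordinates -/
def cutQ (ε t : ℝ) : ℝ := 1 - stepT ε t
/-- symmetric cutoff -/
def cutP (ε t : ℝ) : ℝ := 1 - stepT ε t - stepT ε (-t)

lemma cutQ_contDiff (ε : ℝ) : ContDiff ℝ 1 (cutQ ε) := contDiff_const.sub (stepT_contDiff ε)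
lemma cutP_contDiff (ε : ℝ) : ContDiff ℝ 1 (cutP ε) :=
  (contDiff_const.sub (stepT_contDiff ε)).sub ((stepT_contDiff ε).comp contDiff_neg)

lemma cutQ_mem (ε t : ℝ) : 0 ≤ cutQ ε t ∧ cutQ ε t ≤ 1 := by
  have := stepT_nonneg ε t
  have := stepT_le_one ε t
  unfold cutQ; constructor <;> linarith

lemma cutP_mem {ε : ℝ} (h : 0 < ε) (t : ℝ) : 0 ≤ cutP ε t ∧ cutP ε t ≤ 1 := by
  have := stepT_nonneg ε t
  have := stepT_le_one ε t
  have := stepT_nonneg ε (-t)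
  have := stepT_le_one ε (-t)
  unfold cutP
  rcases le_total t 0 with h0 | h0
  · rw [stepT_zero h (by linarith : t ≤ ε)]; constructor <;> linarith
  · rw [stepT_zero h (by linarith : -t ≤ ε)]; constructor <;> linarith

lemma cutQ_one {ε t : ℝ} (h : 0 < ε) (ht : t ≤ ε) : cutQ ε t = 1 := by
  simp [cutQ, stepT_zero h ht]
lemma cutQ_zero {ε t : ℝ} (h : 0 < ε) (ht : 2 * ε ≤ t) : cutQ ε t = 0 := by
  simp [cutQ, stepT_one h ht]
lemma cutP_one {ε t : ℝ} (h : 0 < ε) (ht : |t| ≤ ε) : cutP ε t = 1 := by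
  simp [cutP, stepT_zero h (abs_le.1 ht).2, stepT_zero h (by linarith [(abs_le.1 ht).1] : -t ≤ ε)]
lemma cutP_zero {ε t : ℝ} (h : 0 < ε) (ht : 2 * ε ≤ |t|) : cutP ε t = 0 := by
  rcases le_total t 0 with h0 | h0
  · rw [abs_of_nonpos h0] at ht
    simp [cutP, stepT_one h ht, stepT_zero h (by linarith : t ≤ ε)]
  · rw [abs_of_nonneg h0] at ht
    simp [cutP, stepT_one h ht, stepT_zero h (by linarith : -t ≤ ε)]

lemma lintegral_stepT {ε : ℝ} (h : 0 < ε) : ∫⁻ t, ENNReal.ofReal |deriv (stepT ε) t| ≤ 1 :=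
  lintegral_deriv_mono (stepT_mono h) ((stepT_contDiff ε).differentiable (by simp))
    (stepT_nonneg ε) (stepT_le_one ε)

lemma lintegral_cutQ {ε : ℝ} (h : 0 < ε) : ∫⁻ t, ENNReal.ofReal |deriv (cutQ ε) t| ≤ 1 := by
  have : ∀ t, deriv (cutQ ε) t = - deriv (stepT ε) t := fun t => by
    unfold cutQ; simp
  simpa [this] using lintegral_stepT h

lemma lintegral_cutP {ε : ℝ} (h : 0 < ε) : ∫⁻ t, ENNReal.ofReal |deriv (cutP ε) t| ≤ 2 := by
  have hd := (stepT_contDiff ε).differentiable (by simp)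
  have hm : Measurable fun t => ENNReal.ofReal |deriv (stepT ε) t| := by
    have := measurable_deriv (stepT ε)
    fun_prop
  have h1 : ∀ t, deriv (cutP ε) t = - deriv (stepT ε) t + deriv (stepT ε) (-t) := fun t => by
    have a := (hd t).hasDerivAt
    have b := (hd (-t)).hasDerivAt.comp t (hasDerivAt_neg t)
    have := ((a.const_sub 1).sub b).deriv
    refine Eq.trans this ?_
    ring
  calc ∫⁻ t, ENNReal.ofReal |deriv (cutP ε) t|
      ≤ ∫⁻ t, (ENNReal.ofReal |deriv (stepT ε) t| + ENNReal.ofReal |deriv (stepT ε) (-t)|) := by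
        refine lintegral_mono fun t => ?_
        beta_reduce
        rw [← ENNReal.ofReal_add (abs_nonneg _) (abs_nonneg _), h1]
        apply ENNReal.ofReal_le_ofReal
        refine (abs_add_le _ _).trans ?_
        rw [abs_neg]
    _ = (∫⁻ t, ENNReal.ofReal |deriv (stepT ε) t|) + ∫⁻ t, ENNReal.ofReal |deriv (stepT ε) (-t)| :=
        lintegral_add_left hm _
    _ = (∫⁻ t, ENNReal.ofReal |deriv (stepT ε) t|) + ∫⁻ t, ENNReal.ofReal |deriv (stepT ε) t| := by
        rw [lintegral_neg_eq_self (μ := volume) (fun t => ENNReal.ofReal |deriv (stepT ε) t|)]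
    _ ≤ 1 + 1 := add_le_add (lintegral_stepT h) (lintegral_stepT h)
    _ = 2 := by norm_num

/-- The approximating phase. -/
def phase (ε : ℝ) (x : V2) : ℝ := (1 - cutP ε (x 1) * cutQ ε (x 0)) * ang x

lemma phase_eventually_zero {ε : ℝ} (h : 0 < ε) {x : V2} (hx : toC x ∉ Complex.slitPlane) :
    phase ε =ᶠ[𝓝 x] fun _ => 0 := by
  rw [Complex.mem_slitPlane_iff, toC_re, toC_im] at hx
  push Not at hx
  have h0 : ContinuousAt (fun y : V2 => y 0) x := by fun_prop
  have h1 : ContinuousAt (fun y : V2 => |y 1|) x := by fun_prop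
  filter_upwards [h0.eventually_lt continuousAt_const (show x 0 < ε by linarith [hx.1]),
    h1.eventually_lt continuousAt_const (show |x 1| < ε by simpa [hx.2] using h)] with y a b
  simp [phase, cutP_one h b.le, cutQ_one h a.le]

lemma cutoff_contDiff (ε : ℝ) :
    ContDiff ℝ 1 (fun x : V2 => 1 - cutP ε (x 1) * cutQ ε (x 0)) := by
  have hP := cutP_contDiff ε
  have hQ := cutQ_contDiff ε
  have h0 : ContDiff ℝ 1 (fun x : V2 => x 0) := by fun_prop
  have h1 : ContDiff ℝ 1 (fun x : V2 => x 1) := by fun_prop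
  exact contDiff_const.sub ((hP.comp h1).mul (hQ.comp h0))

lemma phase_contDiff {ε : ℝ} (h : 0 < ε) : ContDiff ℝ 1 (phase ε) := by
  rw [contDiff_iff_contDiffAt]
  intro x
  by_cases hx : toC x ∈ Complex.slitPlane
  · exact (cutoff_contDiff ε).contDiffAt.mul (contDiffAt_ang hx)
  · exact contDiffAt_const.congr_of_eventuallyEq (phase_eventually_zero h hx)

lemma cutoff_fderiv (ε : ℝ) (x : V2) :
    fderiv ℝ (fun x : V2 => 1 - cutP ε (x 1) * cutQ ε (x 0)) x (EuclideanSpace.single 0 1)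
      = - (cutP ε (x 1) * deriv (cutQ ε) (x 0)) ∧
    fderiv ℝ (fun x : V2 => 1 - cutP ε (x 1) * cutQ ε (x 0)) x (EuclideanSpace.single 1 1)
      = - (deriv (cutP ε) (x 1) * cutQ ε (x 0)) := by
  have hP := ((cutP_contDiff ε).differentiable (by simp) (x 1)).hasDerivAt
  have hQ := ((cutQ_contDiff ε).differentiable (by simp) (x 0)).hasDerivAt
  have h0 : HasFDerivAt (fun y : V2 => y 0) (EuclideanSpace.proj (𝕜 := ℝ) (0 : Fin 2)) x :=
    (EuclideanSpace.proj (𝕜 := ℝ) (0 : Fin 2)).hasFDerivAt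
  have h1 : HasFDerivAt (fun y : V2 => y 1) (EuclideanSpace.proj (𝕜 := ℝ) (1 : Fin 2)) x :=
    (EuclideanSpace.proj (𝕜 := ℝ) (1 : Fin 2)).hasFDerivAt
  have h2 := ((hP.comp_hasFDerivAt x h1).mul (hQ.comp_hasFDerivAt x h0)).const_sub 1
  have h3 : fderiv ℝ (fun x : V2 => 1 - cutP ε (x 1) * cutQ ε (x 0)) x = _ := h2.fderiv
  rw [h3]
  constructor
  · simp
  · simp [mul_comm]

lemma sqrt_bound {a b p q A η : ℝ} (hA : |A| ≤ Real.pi) (h0 : 0 ≤ η) (h1 : η ≤ 1) :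
    Real.sqrt (1 + ((η * a + A * p) ^ 2 + (η * b + A * q) ^ 2)) ≤
      Real.sqrt (1 + (a ^ 2 + b ^ 2)) + Real.pi * (|p| + |q|) := by
  have key : ∀ a p : ℝ, (η * a + A * p) ^ 2 ≤ (|a| + Real.pi * |p|) ^ 2 := fun a p => by
    apply sq_le_sq'
    · have : |η * a + A * p| ≤ |a| + Real.pi * |p| := by
        refine (abs_add_le _ _).trans ?_
        rw [abs_mul, abs_mul, abs_of_nonneg h0]
        have := mul_le_of_le_one_left (abs_nonneg a) h1
        have := mul_le_mul_of_nonneg_right hA (abs_nonneg p)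
        linarith
      exact (abs_le.1 this).1
    · have : |η * a + A * p| ≤ |a| + Real.pi * |p| := by
        refine (abs_add_le _ _).trans ?_
        rw [abs_mul, abs_mul, abs_of_nonneg h0]
        have := mul_le_of_le_one_left (abs_nonneg a) h1
        have := mul_le_mul_of_nonneg_right hA (abs_nonneg p)
        linarith
      exact (abs_le.1 this).2
  have hpi := Real.pi_pos
  set S := Real.sqrt (1 + (a ^ 2 + b ^ 2)) with hS
  have hS2 : S ^ 2 = 1 + (a ^ 2 + b ^ 2) := Real.sq_sqrt (by positivity)
  have ha : |a| ≤ S := Real.abs_le_sqrt (by nlinarith [sq_nonneg b])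
  have hb : |b| ≤ S := Real.abs_le_sqrt (by nlinarith [sq_nonneg a])
  apply Real.sqrt_le_iff.2 ⟨by positivity, ?_⟩
  have k1 := key a p
  have k2 := key b q
  have m1 := mul_le_mul_of_nonneg_right ha (by positivity : 0 ≤ Real.pi * |p|)
  have m2 := mul_le_mul_of_nonneg_right hb (by positivity : 0 ≤ Real.pi * |q|)
  have m3 : 0 ≤ (Real.pi * |p|) * (Real.pi * |q|) := by positivity
  have e1 := sq_abs a
  have e2 := sq_abs b
  nlinarith

lemma area_pointwise {ε : ℝ} (h : 0 < ε) (x : V2) :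
    areaIntegrand (fun y => circ (phase ε y)) x ≤
      Real.sqrt (1 + frobSq (fderiv ℝ vortex x)) +
      Real.pi * (cutP ε (x 1) * |deriv (cutQ ε) (x 0)| + |deriv (cutP ε) (x 1)| * cutQ ε (x 0)) := by
  have hd := (phase_contDiff h).differentiable (by simp) x
  have hP := cutP_mem h (x 1)
  have hQ := cutQ_mem ε (x 0)
  have hPQ : 0 ≤ cutP ε (x 1) * cutQ ε (x 0) := mul_nonneg hP.1 hQ.1
  have hPQ' : cutP ε (x 1) * cutQ ε (x 0) ≤ 1 := mul_le_one₀ hP.2 hQ.1 hQ.2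
  unfold areaIntegrand
  rw [frobSq_circ_comp hd, detJ_circ_comp hd]
  by_cases hx : toC x ∈ Complex.slitPlane
  · rw [frobSq_vortex hx]
    have hc := ((cutoff_contDiff ε).differentiable (by simp) x).hasFDerivAt
    have ha := ((contDiffAt_ang hx).differentiableAt (by simp)).hasFDerivAt
    have hm : fderiv ℝ (phase ε) x = _ := (hc.mul ha).fderiv
    have hb := sqrt_bound (a := fderiv ℝ ang x (EuclideanSpace.single 0 1))
      (b := fderiv ℝ ang x (EuclideanSpace.single 1 1))
      (p := - (cutP ε (x 1) * deriv (cutQ ε) (x 0)))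
      (q := - (deriv (cutP ε) (x 1) * cutQ ε (x 0)))
      (A := ang x) (η := 1 - cutP ε (x 1) * cutQ ε (x 0)) (Complex.abs_arg_le_pi _)
      (by linarith) (by linarith)
    rw [abs_neg, abs_neg, abs_mul, abs_mul, abs_of_nonneg hP.1, abs_of_nonneg hQ.1] at hb
    rw [hm]
    simp only [add_apply, smul_apply, smul_eq_mul,
      (cutoff_fderiv ε x).1, (cutoff_fderiv ε x).2]
    simpa using hb
  · rw [(phase_eventually_zero h hx).fderiv_eq]
    have : Real.sqrt 1 ≤ Real.sqrt (1 + frobSq (fderiv ℝ vortex x)) :=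
      Real.sqrt_le_sqrt (by linarith [frobSq_nonneg (fderiv ℝ vortex x)])
    have h2 : 0 ≤ Real.pi * (cutP ε (x 1) * |deriv (cutQ ε) (x 0)| +
        |deriv (cutP ε) (x 1)| * cutQ ε (x 0)) :=
      mul_nonneg Real.pi_pos.le (add_nonneg (mul_nonneg hP.1 (abs_nonneg _))
        (mul_nonneg (abs_nonneg _) hQ.1))
    rw [Real.sqrt_one] at this
    simp
    linarith

lemma coord_lt {l : ℝ} {x : V2} (hx : x ∈ ball (0 : V2) l) (i : Fin 2) : |x i| < l := by
  rw [mem_ball_zero_iff] at hx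
  exact (PiLp.norm_apply_le x i).trans_lt hx

lemma graphArea_le {l ε : ℝ} (hl : 0 < l) (h : 0 < ε) :
    graphArea (fun y => circ (phase ε y)) (ball (0 : V2) l) ≤
      vortexGradArea l + ENNReal.ofReal (2 * Real.pi * l + 8 * Real.pi * ε) := by
  set F1 : ℝ → ℝ≥0∞ := fun t => ENNReal.ofReal |deriv (cutQ ε) t|
  set G1 : ℝ → ℝ≥0∞ := (Set.Icc (-(2*ε)) (2*ε)).indicator 1
  set F2 : ℝ → ℝ≥0∞ := (Set.Icc (-l) (2*ε)).indicator 1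
  set G2 : ℝ → ℝ≥0∞ := fun t => ENNReal.ofReal |deriv (cutP ε) t|
  have mF1 : Measurable F1 := by
    have := measurable_deriv (cutQ ε)
    fun_prop
  have mG2 : Measurable G2 := by
    have := measurable_deriv (cutP ε)
    fun_prop
  have mG1 : Measurable G1 := measurable_one.indicator measurableSet_Icc
  have mF2 : Measurable F2 := measurable_one.indicator measurableSet_Icc
  have c0 : Measurable (fun x : V2 => x 0) := by fun_prop
  have c1 : Measurable (fun x : V2 => x 1) := by fun_prop
  have m1 : Measurable fun x : V2 => F1 (x 0) * G1 (x 1) := (mF1.comp c0).mul (mG1.comp c1)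
  have m2 : Measurable fun x : V2 => F2 (x 0) * G2 (x 1) := (mF2.comp c0).mul (mG2.comp c1)
  have m12 : Measurable fun x : V2 => F1 (x 0) * G1 (x 1) + F2 (x 0) * G2 (x 1) := m1.add m2
  have iG1 : ∫⁻ t, G1 t = ENNReal.ofReal (4 * ε) := by
    rw [lintegral_indicator_one measurableSet_Icc, Real.volume_Icc]; congr 1; ring
  have iF2 : ∫⁻ t, F2 t = ENNReal.ofReal (l + 2 * ε) := by
    rw [lintegral_indicator_one measurableSet_Icc, Real.volume_Icc]; congr 1; ring
  have hpt : ∀ x ∈ ball (0 : V2) l,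
      ENNReal.ofReal (areaIntegrand (fun y => circ (phase ε y)) x) ≤
      ENNReal.ofReal (Real.sqrt (1 + frobSq (fderiv ℝ vortex x))) +
        ENNReal.ofReal Real.pi * (F1 (x 0) * G1 (x 1) + F2 (x 0) * G2 (x 1)) := by
    intro x hx
    have hP := cutP_mem h (x 1)
    have hQ := cutQ_mem ε (x 0)
    refine (ENNReal.ofReal_le_ofReal (area_pointwise h x)).trans ?_
    rw [ENNReal.ofReal_add (Real.sqrt_nonneg _) (mul_nonneg Real.pi_pos.le
        (add_nonneg (mul_nonneg hP.1 (abs_nonneg _)) (mul_nonneg (abs_nonneg _) hQ.1))),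
      ENNReal.ofReal_mul Real.pi_pos.le, ENNReal.ofReal_add (mul_nonneg hP.1 (abs_nonneg _))
        (mul_nonneg (abs_nonneg _) hQ.1)]
    gcongr
    · by_cases hc : |x 1| ≤ 2 * ε
      · have : G1 (x 1) = 1 := Set.indicator_of_mem
            (show x 1 ∈ Set.Icc (-(2*ε)) (2*ε) from abs_le.1 hc) _
        rw [this, mul_one]
        exact ENNReal.ofReal_le_ofReal (mul_le_of_le_one_left (abs_nonneg _) hP.2)
      · rw [cutP_zero h (not_le.1 hc).le]; simp
    · by_cases hc : x 0 ≤ 2 * ε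
      · have : F2 (x 0) = 1 := Set.indicator_of_mem
          (show x 0 ∈ Set.Icc (-l) (2*ε) from ⟨(abs_lt.1 (coord_lt hx 0)).1.le, hc⟩) _
        rw [this, one_mul]
        exact ENNReal.ofReal_le_ofReal (mul_le_of_le_one_right (abs_nonneg _) hQ.2)
      · rw [cutQ_zero h (not_le.1 hc).le]; simp
  calc graphArea (fun y => circ (phase ε y)) (ball (0 : V2) l)
      ≤ ∫⁻ x in ball (0 : V2) l, (ENNReal.ofReal (Real.sqrt (1 + frobSq (fderiv ℝ vortex x))) +
        ENNReal.ofReal Real.pi * (F1 (x 0) * G1 (x 1) + F2 (x 0) * G2 (x 1))) :=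
        setLIntegral_mono' measurableSet_ball hpt
    _ = vortexGradArea l + ∫⁻ x in ball (0 : V2) l,
        ENNReal.ofReal Real.pi * (F1 (x 0) * G1 (x 1) + F2 (x 0) * G2 (x 1)) :=
        lintegral_add_right _ ((m1.add m2).const_mul _)
    _ ≤ vortexGradArea l + ∫⁻ x : V2,
        ENNReal.ofReal Real.pi * (F1 (x 0) * G1 (x 1) + F2 (x 0) * G2 (x 1)) := by
        gcongr; exact Measure.restrict_le_self
    _ = vortexGradArea l + ENNReal.ofReal Real.pi *
        ((∫⁻ t, F1 t) * (∫⁻ t, G1 t) + (∫⁻ t, F2 t) * (∫⁻ t, G2 t)) := by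
        rw [lintegral_const_mul _ m12, lintegral_add_left m1,
          lintegral_prod_le _ _ mF1 mG1, lintegral_prod_le _ _ mF2 mG2]
    _ ≤ vortexGradArea l + ENNReal.ofReal Real.pi *
        (1 * ENNReal.ofReal (4 * ε) + ENNReal.ofReal (l + 2 * ε) * 2) := by
        rw [iG1, iF2]
        gcongr
        · exact lintegral_cutQ h
        · exact lintegral_cutP h
    _ = vortexGradArea l + ENNReal.ofReal (2 * Real.pi * l + 8 * Real.pi * ε) := by
        congr 1
        rw [show (2 : ℝ≥0∞) = ENNReal.ofReal 2 by simp, one_mul,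
          ← ENNReal.ofReal_mul (by positivity), ← ENNReal.ofReal_add (by positivity) (by positivity),
          ← ENNReal.ofReal_mul Real.pi_pos.le]
        congr 1; ring

lemma norm_circ (t : ℝ) : ‖circ t‖ = 1 := by
  simp [EuclideanSpace.norm_eq, circ]

lemma norm_vortex_le (x : V2) : ‖vortex x‖ ≤ 1 := by
  rw [vortex, norm_smul, norm_inv, norm_norm]
  exact inv_mul_le_one

lemma l1_bound {l ε : ℝ} (hl : 0 < l) (h : 0 < ε) :
    ∫⁻ x in ball (0 : V2) l, ENNReal.ofReal ‖circ (phase ε x) - vortex x‖ ≤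
      ENNReal.ofReal (16 * l * ε) := by
  set F : ℝ → ℝ≥0∞ := (Set.Icc (-l) l).indicator 1
  set G : ℝ → ℝ≥0∞ := (Set.Icc (-(2*ε)) (2*ε)).indicator 1
  have mF : Measurable F := measurable_one.indicator measurableSet_Icc
  have mG : Measurable G := measurable_one.indicator measurableSet_Icc
  have c0 : Measurable (fun x : V2 => x 0) := by fun_prop
  have c1 : Measurable (fun x : V2 => x 1) := by fun_prop
  have m1 : Measurable fun x : V2 => F (x 0) * G (x 1) := (mF.comp c0).mul (mG.comp c1)
  have iG : ∫⁻ t, G t = ENNReal.ofReal (4 * ε) := by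
    rw [lintegral_indicator_one measurableSet_Icc, Real.volume_Icc]; congr 1; ring
  have iF : ∫⁻ t, F t = ENNReal.ofReal (2 * l) := by
    rw [lintegral_indicator_one measurableSet_Icc, Real.volume_Icc]; congr 1; ring
  calc ∫⁻ x in ball (0 : V2) l, ENNReal.ofReal ‖circ (phase ε x) - vortex x‖
      ≤ ∫⁻ x in ball (0 : V2) l, ENNReal.ofReal 2 * (F (x 0) * G (x 1)) := by
        refine setLIntegral_mono' measurableSet_ball fun x hx => ?_
        have : F (x 0) = 1 := Set.indicator_of_mem
          (show x 0 ∈ Set.Icc (-l) l from abs_le.1 (coord_lt hx 0).le) _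
        rw [this, one_mul]
        by_cases hc : |x 1| ≤ 2 * ε
        · have : G (x 1) = 1 := Set.indicator_of_mem
            (show x 1 ∈ Set.Icc (-(2*ε)) (2*ε) from abs_le.1 hc) _
          rw [this, mul_one]
          apply ENNReal.ofReal_le_ofReal
          refine (norm_sub_le _ _).trans ?_
          rw [norm_circ]
          linarith [norm_vortex_le x]
        · push Not at hc
          have hne : x ≠ 0 := by
            rintro rfl
            simp at hc; linarith
          rw [phase, cutP_zero h hc.le]
          simp [circ_ang hne]
    _ ≤ ∫⁻ x : V2, ENNReal.ofReal 2 * (F (x 0) * G (x 1)) := by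
        gcongr; exact Measure.restrict_le_self
    _ = ENNReal.ofReal (16 * l * ε) := by
        rw [lintegral_const_mul _ m1, lintegral_prod_le _ _ mF mG, iF, iG,
          ← ENNReal.ofReal_mul (by positivity), ← ENNReal.ofReal_mul (by positivity)]
        congr 1; ring

lemma vortexGradArea_lt_top (l : ℝ) : vortexGradArea l < ⊤ := by
  have hi : IntegrableOn (fun x : V2 => 1 + 2 * ‖x‖⁻¹) (ball (0 : V2) l) := by
    have h2 : IntegrableOn (fun x : V2 => ‖x‖⁻¹) (ball (0 : V2) l) := by
      rw [integrableOn_fun_norm_addHaar volume (f := fun t : ℝ => t⁻¹)]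
      have : IntegrableOn (fun _ : ℝ => (1 : ℝ)) (Set.Ioo 0 l) := by simp
      refine this.congr_fun (fun t ht => ?_) measurableSet_Ioo
      have := ht.1.ne'
      simp [this]
    exact (integrableOn_const (measure_ball_lt_top (μ := (volume : Measure V2))).ne).add (h2.const_mul 2)
  refine lt_of_le_of_lt ?_ hi.lintegral_lt_top
  apply lintegral_mono_ae
  have : ∀ᵐ x : V2, x ≠ 0 := compl_mem_ae_iff.2 (measure_singleton 0)
  filter_upwards [ae_restrict_of_ae this] with x hx
  apply ENNReal.ofReal_le_ofReal
  apply Real.sqrt_le_iff.2 ⟨by positivity, ?_⟩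
  have := frobSq_vortex_le hx
  have : 0 ≤ ‖x‖⁻¹ := by positivity
  nlinarith

lemma relaxedArea_le {l : ℝ} (hl : 0 < l) :
    relaxedArea l ≤ vortexGradArea l + ENNReal.ofReal (2 * Real.pi * l) := by
  have hε : ∀ k : ℕ, (0 : ℝ) < 1 / ((k : ℝ) + 1) := fun k => by positivity
  have hε0 : Tendsto (fun k : ℕ => 1 / ((k : ℝ) + 1)) atTop (𝓝 0) :=
    tendsto_one_div_add_atTop_nhds_zero_nat
  have hmem : relaxedArea l ≤ Filter.liminf (fun k : ℕ =>
      graphArea (fun y => circ (phase (1 / ((k : ℝ) + 1)) y)) (ball (0 : V2) l)) atTop := by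
    apply sInf_le
    refine ⟨fun k y => circ (phase (1 / ((k : ℝ) + 1)) y), fun k => ?_, ?_, rfl⟩
    · exact (contDiff_circ.comp (phase_contDiff (hε k))).contDiffOn
    · refine tendsto_of_tendsto_of_tendsto_of_le_of_le tendsto_const_nhds ?_ (fun _ => bot_le)
        (fun k => l1_bound hl (hε k))
      have := ENNReal.tendsto_ofReal (hε0.const_mul (16 * l))
      simpa using this
  refine hmem.trans ?_
  have ht : Tendsto (fun k : ℕ => vortexGradArea l +
      ENNReal.ofReal (2 * Real.pi * l + 8 * Real.pi * (1 / ((k : ℝ) + 1)))) atTop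
      (𝓝 (vortexGradArea l + ENNReal.ofReal (2 * Real.pi * l))) := by
    have := ENNReal.tendsto_ofReal ((hε0.const_mul (8 * Real.pi)).const_add (2 * Real.pi * l))
    rw [mul_zero, add_zero] at this
    exact this.const_add _
  rw [← ht.liminf_eq]
  exact liminf_le_liminf (Eventually.of_forall fun k => graphArea_le hl (hε k))

/-- The relaxed area of the graph of the vortex map over `B_l` is at most
`∫_{B_l} √(1 + |∇u|²) dx + 2πl`; in particular for `l < 1/2` the strict inequality
`Ā(u, B_l) < ∫_{B_l} √(1 + |∇u|²) dx + π` holds. -/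
theorem relaxedArea_vortex_le_cylinder (l : ℝ) (hl : 0 < l) :
    relaxedArea l ≤ vortexGradArea l + ENNReal.ofReal (2 * Real.pi * l) ∧
    (l < 1 / 2 → relaxedArea l < vortexGradArea l + ENNReal.ofReal Real.pi) := by
  refine ⟨relaxedArea_le hl, fun h => (relaxedArea_le hl).trans_lt ?_⟩
  refine ENNReal.add_lt_add_left (vortexGradArea_lt_top l).ne ?_
  rw [ENNReal.ofReal_lt_ofReal_iff Real.pi_pos]
  nlinarith [Real.pi_pos]
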